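/- arXiv:1501.07122 — 8 statements merged into one kernel-verified Lean document; each statement's English description precedes it below -/
import Mathlib

section
/- Let φ : ℝ × ℝⁿ → ℝⁿ be a flow that is σ-reversible for an involution σ, and let z⁺ be a periodic point with minimal period T > 0 (φ(T,z⁺) = z⁺ and φ(t,z⁺) ≠ z⁺ for 0 < t < T). If the orbit γ = {φ(t, z⁺) : t ∈ ℝ} contains two distinct σ-related points (there exist t₁, t₂ with φ(t₁,z⁺) ≠ φ(t₂,z⁺) and σ(φ(t₁,z⁺)) = φ(t₂,z⁺)), then γ contains two distinct σ-fixed points: there exist w₁, w₂ ∈ γ with w₁ ≠ w₂, σ(w₁) = w₁ and σ(w₂) = w₂. -/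
theorem reversible_cycle_two_fixed_points
    {n : ℕ} (φ : ℝ → (Fin n → ℝ) → (Fin n → ℝ)) (σ : (Fin n → ℝ) → (Fin n → ℝ))
    (hφ0 : ∀ z, φ 0 z = z)
    (hφadd : ∀ s t z, φ (s + t) z = φ s (φ t z))
    (hinv : ∀ z, σ (σ z) = z)
    (hrev : ∀ t z, σ (φ t z) = φ (-t) (σ z))
    (zplus : Fin n → ℝ) (T : ℝ) (hT : 0 < T)
    (hper : φ T zplus = zplus)
    (hmin : ∀ t, 0 < t → t < T → φ t zplus ≠ zplus)
    (hrel : ∃ t₁ t₂ : ℝ, φ t₁ zplus ≠ φ t₂ zplus ∧ σ (φ t₁ zplus) = φ t₂ zplus) :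
    ∃ w₁ w₂ : Fin n → ℝ,
      w₁ ∈ Set.range (fun t => φ t zplus) ∧ w₂ ∈ Set.range (fun t => φ t zplus) ∧
      w₁ ≠ w₂ ∧ σ w₁ = w₁ ∧ σ w₂ = w₂ := by
  obtain ⟨t₁, t₂, -, h⟩ := hrel
  have key : ∀ s, σ (φ s zplus) = φ (t₁ + t₂ - s) zplus := by
    intro s
    have e : φ s zplus = φ (s - t₁) (φ t₁ zplus) := by
      rw [← hφadd]; congr 1; ring
    rw [e, hrev, h, ← hφadd]
    congr 1; ring
  refine ⟨φ ((t₁ + t₂) / 2) zplus, φ ((t₁ + t₂) / 2 + T / 2) zplus, ⟨_, rfl⟩, ⟨_, rfl⟩, ?_, ?_, ?_⟩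
  · intro he
    have h2 := congrArg (φ (-((t₁ + t₂) / 2))) he
    rw [← hφadd, ← hφadd, neg_add_cancel, neg_add_cancel_left, hφ0] at h2
    exact hmin (T / 2) (by linarith) (by linarith) h2.symm
  · rw [key]; congr 1; ring
  · rw [key]
    have e : (t₁ + t₂) / 2 + T / 2 = (t₁ + t₂ - ((t₁ + t₂) / 2 + T / 2)) + T := by ring
    conv_rhs => rw [e, hφadd, hper]
end

section
/- Let φ : ℝ × ℝⁿ → ℝⁿ be a flow that is σ-reversible for an involution σ, and let z be a periodic point with minimal period T > 0, with orbit γ = {φ(t,z) : t ∈ ℝ}. Then σ(γ) = γ if and only if γ contains two distinct σ-related points, i.e. there exist t₁, t₂ with φ(t₁,z) ≠ φ(t₂,z) and σ(φ(t₁,z)) = φ(t₂,z). -/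
theorem reversible_cycle_invariant_iff_related_points
    {n : ℕ} (φ : ℝ → (Fin n → ℝ) → (Fin n → ℝ)) (σ : (Fin n → ℝ) → (Fin n → ℝ))
    (hφ0 : ∀ z, φ 0 z = z)
    (hφadd : ∀ s t z, φ (s + t) z = φ s (φ t z))
    (hinv : ∀ z, σ (σ z) = z)
    (hrev : ∀ t z, σ (φ t z) = φ (-t) (σ z))
    (z : Fin n → ℝ) (T : ℝ) (hT : 0 < T)
    (hper : φ T z = z)
    (hmin : ∀ t, 0 < t → t < T → φ t z ≠ z) :
    σ '' (Set.range (fun t => φ t z)) = Set.range (fun t => φ t z) ↔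
      ∃ t₁ t₂ : ℝ, φ t₁ z ≠ φ t₂ z ∧ σ (φ t₁ z) = φ t₂ z := by
  constructor
  · intro h
    have hz : σ z ∈ Set.range (fun t => φ t z) := by
      rw [← h]
      exact ⟨z, ⟨0, hφ0 z⟩, rfl⟩
    obtain ⟨a, ha⟩ := hz
    have ha' : φ a z = σ z := ha
    refine ⟨(a - T / 2) / 2, (a - T / 2) / 2 + T / 2, ?_, ?_⟩
    · intro he
      apply hmin (T / 2) (by linarith) (by linarith)
      have h1 := congrArg (φ (-((a - T / 2) / 2))) he
      rw [← hφadd, ← hφadd, neg_add_cancel, neg_add_cancel_left, hφ0] at h1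
      exact h1.symm
    · rw [hrev, ← ha', ← hφadd]
      congr 1
      ring
  · rintro ⟨t₁, t₂, -, h⟩
    have key : ∀ t, σ (φ t z) = φ (t₁ - t + t₂) z := by
      intro t
      have h1 : φ t z = φ (t - t₁) (φ t₁ z) := by
        rw [← hφadd, sub_add_cancel]
      rw [h1, hrev, h, ← hφadd, neg_sub]
    ext w
    constructor
    · rintro ⟨_, ⟨t, rfl⟩, rfl⟩
      exact ⟨_, (key t).symm⟩
    · rintro ⟨t, rfl⟩
      exact ⟨σ (φ t z), ⟨_, (key t).symm⟩, hinv _⟩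
end

section
/- Let φ : ℝ × ℝⁿ → ℝⁿ be a continuous flow that is σ-reversible for an involution σ, let z* be a σ-fixed point with φ(T, z*) = z* for some T > 0, and let α : ℝⁿ → ℝ be a continuous σ-compatible function with α(φ(t,z*)) > 0 for all t. Then ∫₀ᵀ (1/α(φ(t, z*)) − 1) dt = 0; equivalently, ∫₀ᵀ 1/α(φ(t, z*)) dt = T. -/
open intervalIntegral in
theorem reversible_flow_integral_compat
    {n : ℕ} (φ : ℝ → (Fin n → ℝ) → (Fin n → ℝ)) (σ : (Fin n → ℝ) → (Fin n → ℝ))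
    (hφcont : Continuous (fun p : ℝ × (Fin n → ℝ) => φ p.1 p.2))
    (hφ0 : ∀ z, φ 0 z = z)
    (hφadd : ∀ s t z, φ (s + t) z = φ s (φ t z))
    (hinv : ∀ z, σ (σ z) = z)
    (hrev : ∀ t z, σ (φ t z) = φ (-t) (σ z))
    (zstar : Fin n → ℝ) (hfix : σ zstar = zstar)
    (T : ℝ) (hT : 0 < T) (hper : φ T zstar = zstar)
    (α : (Fin n → ℝ) → ℝ) (hαcont : Continuous α)
    (hcompat : ∀ z, α z + α (σ z) = 2 * α z * α (σ z))
    (hpos : ∀ t : ℝ, 0 < α (φ t zstar)) :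
    (∫ t in (0:ℝ)..T, (1 / α (φ t zstar) - 1)) = 0 ∧
    (∫ t in (0:ℝ)..T, 1 / α (φ t zstar)) = T := by
  have key : ∀ t, 1 / α (φ (T - t) zstar) - 1 = -(1 / α (φ t zstar) - 1) := by
    intro t
    have h1 : φ (T - t) zstar = σ (φ t zstar) := by
      rw [hrev, hfix, sub_eq_add_neg, add_comm, hφadd, hper]
    have h2 := hpos t
    have h3 := hpos (T - t)
    have h4 := hcompat (φ t zstar)
    rw [← h1] at h4
    field_simp
    linarith
  have hc : Continuous (fun t : ℝ => 1 / α (φ t zstar)) := by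
    have h : Continuous (fun t : ℝ => α (φ t zstar)) :=
      hαcont.comp (hφcont.comp (continuous_id.prodMk continuous_const))
    exact continuous_const.div h (fun t => (hpos t).ne')
  have h0 : (∫ t in (0:ℝ)..T, (1 / α (φ t zstar) - 1)) = 0 := by
    have h := intervalIntegral.integral_comp_sub_left
      (a := 0) (b := T) (fun t => 1 / α (φ t zstar) - 1) T
    simp only [key, intervalIntegral.integral_neg, sub_self, sub_zero] at h
    linarith
  refine ⟨h0, ?_⟩
  rw [intervalIntegral.integral_sub (hc.intervalIntegrable _ _)
    (continuous_const.intervalIntegrable _ _)] at h0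
  simp only [intervalIntegral.integral_const, smul_eq_mul] at h0
  linarith
end

section
/- Let φ : ℝ × ℝⁿ → ℝⁿ be a flow that is σ-symmetric for an involution σ, and let z⁺ be a periodic point with minimal period T > 0 (φ(T,z⁺) = z⁺ and φ(t,z⁺) ≠ z⁺ for 0 < t < T). If the orbit of z⁺ contains two distinct σ-related points (there exists t with σ(z⁺) = φ(t, z⁺) ≠ z⁺), then for every point z on the orbit, σ(z) = φ(T/2, z). -/
theorem symmetric_flow_half_period_symmetry
    {n : ℕ} (φ : ℝ → (Fin n → ℝ) → (Fin n → ℝ)) (σ : (Fin n → ℝ) → (Fin n → ℝ))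
    (hφ0 : ∀ z, φ 0 z = z)
    (hφadd : ∀ s t z, φ (s + t) z = φ s (φ t z))
    (hinv : ∀ z, σ (σ z) = z)
    (hsym : ∀ t z, σ (φ t z) = φ t (σ z))
    (zplus : Fin n → ℝ) (T : ℝ) (hT : 0 < T)
    (hper : φ T zplus = zplus)
    (hmin : ∀ t, 0 < t → t < T → φ t zplus ≠ zplus)
    (hrel : ∃ t : ℝ, σ zplus = φ t zplus ∧ φ t zplus ≠ zplus) :
    ∀ z ∈ Set.range (fun t => φ t zplus), σ z = φ (T / 2) z := by
  obtain ⟨t, ht, hne⟩ := hrel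
  let S : AddSubgroup ℝ :=
    { carrier := {s | φ s zplus = zplus}
      zero_mem' := hφ0 zplus
      add_mem' := by
        intro a b ha hb
        simp only [Set.mem_setOf_eq] at ha hb ⊢
        rw [hφadd, hb, ha]
      neg_mem' := by
        intro a ha
        simp only [Set.mem_setOf_eq] at ha ⊢
        have h := hφadd (-a) a zplus
        rw [neg_add_cancel, hφ0, ha] at h
        exact h.symm }
  have hS : ∀ s, s ∈ S ↔ φ s zplus = zplus := fun s => Iff.rfl
  have hTS : T ∈ S := hper
  have hk : ⌊t / T⌋ • T ∈ S := S.zsmul_mem hTS _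
  have hk' : φ (⌊t / T⌋ • T) zplus = zplus := hk
  obtain ⟨r, hr⟩ : ∃ r, r = t - ⌊t / T⌋ • T := ⟨_, rfl⟩
  have hrt : φ t zplus = φ r zplus := by
    have h := hφadd r (⌊t / T⌋ • T) zplus
    rw [hk', hr, sub_add_cancel, ← hr] at h
    exact h
  have h0 : 0 ≤ r := by
    have h := (le_div_iff₀ hT).1 (Int.floor_le (t / T))
    rw [hr, zsmul_eq_mul]; linarith
  have h1 : r < T := by
    have h := (div_lt_iff₀ hT).1 (Int.lt_floor_add_one (t / T))
    rw [hr, zsmul_eq_mul]; linarith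
  rw [hrt] at ht hne
  have hpos : 0 < r := by
    rcases h0.lt_or_eq with h | h
    · exact h
    · exact absurd (by rw [← h, hφ0]) hne
  have h2 : r + r ∈ S := by
    rw [hS, hφadd, ← ht, ← hsym, ← ht, hinv]
  have h3 : r + r - T ∈ S := S.sub_mem h2 hTS
  have hrT : r = T / 2 := by
    rcases lt_trichotomy (r + r) T with h | h | h
    · exact absurd h2 (hmin _ (by linarith) h)
    · linarith
    · exact absurd h3 (hmin _ (by linarith) (by linarith))
  rintro z ⟨s, rfl⟩
  simp only
  rw [hsym, ht, hrT, ← hφadd, ← hφadd, add_comm]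
end

section
/- Let φ : ℝ × ℝⁿ → ℝⁿ be a continuous flow that is σ-symmetric for an involution σ, let z* be a point with φ(T, z*) = z* for some T > 0 satisfying σ(z*) = φ(T/2, z*), and let α : ℝⁿ → ℝ be a continuous σ-compatible function with α(φ(t,z*)) > 0 for all t. Then ∫₀ᵀ (1/α(φ(t, z*)) − 1) dt = 0; equivalently, ∫₀ᵀ 1/α(φ(t, z*)) dt = T. -/
theorem symmetric_flow_integral_compat
    {n : ℕ} (φ : ℝ → (Fin n → ℝ) → (Fin n → ℝ)) (σ : (Fin n → ℝ) → (Fin n → ℝ))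
    (hφcont : Continuous (fun p : ℝ × (Fin n → ℝ) => φ p.1 p.2))
    (hφ0 : ∀ z, φ 0 z = z)
    (hφadd : ∀ s t z, φ (s + t) z = φ s (φ t z))
    (hinv : ∀ z, σ (σ z) = z)
    (hsym : ∀ t z, σ (φ t z) = φ t (σ z))
    (zstar : Fin n → ℝ) (T : ℝ) (hT : 0 < T)
    (hper : φ T zstar = zstar)
    (hhalf : σ zstar = φ (T / 2) zstar)
    (α : (Fin n → ℝ) → ℝ) (hαcont : Continuous α)
    (hcompat : ∀ z, α z + α (σ z) = 2 * α z * α (σ z))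
    (hpos : ∀ t : ℝ, 0 < α (φ t zstar)) :
    (∫ t in (0:ℝ)..T, (1 / α (φ t zstar) - 1)) = 0 ∧
    (∫ t in (0:ℝ)..T, 1 / α (φ t zstar)) = T := by
  have hc : Continuous (fun t : ℝ => 1 / α (φ t zstar)) := by
    have h1 : Continuous (fun t : ℝ => φ t zstar) :=
      hφcont.comp (Continuous.prodMk continuous_id continuous_const)
    exact continuous_const.div (hαcont.comp h1) (fun t => (hpos t).ne')
  have hg : ∀ t : ℝ, 1 / α (φ (t + T / 2) zstar) = 2 - 1 / α (φ t zstar) := by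
    intro t
    have h1 : σ (φ t zstar) = φ (t + T / 2) zstar := by
      rw [hsym, hhalf, hφadd]
    have h2 := hcompat (φ t zstar)
    rw [h1] at h2
    have ha := (hpos t).ne'
    have hb := (hpos (t + T / 2)).ne'
    generalize α (φ (t + T / 2) zstar) = b at *
    generalize α (φ t zstar) = a at *
    field_simp
    linarith
  have key : (∫ t in (0:ℝ)..T, 1 / α (φ t zstar)) = T := by
    rw [← intervalIntegral.integral_add_adjacent_intervals
      (hc.intervalIntegrable 0 (T / 2)) (hc.intervalIntegrable (T / 2) T)]
    have h3 : (∫ t in (T / 2)..T, 1 / α (φ t zstar))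
        = ∫ t in (0:ℝ)..(T / 2), (2 - 1 / α (φ t zstar)) := by
      have h4 := intervalIntegral.integral_comp_add_right (a := 0) (b := T / 2)
        (fun t : ℝ => 1 / α (φ t zstar)) (T / 2)
      simp only [hg, zero_add, add_halves] at h4
      exact h4.symm
    rw [h3, intervalIntegral.integral_sub (by simp) (hc.intervalIntegrable _ _),
      intervalIntegral.integral_const]
    simp only [smul_eq_mul]
    ring
  refine ⟨?_, key⟩
  rw [intervalIntegral.integral_sub (hc.intervalIntegrable _ _) (by simp), key,
    intervalIntegral.integral_const]
  simp
end

section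
/- Let φ : ℝ × ℝⁿ → ℝⁿ be a continuous flow that is σ-symmetric for an involution σ, let z* be a point with φ(T, z*) = z* for some T > 0 satisfying σ(z*) = φ(T/2, z*), and let δ : ℝⁿ → ℝ be a continuous σ-odd function with δ(z) > −1 for all z. Then ∫₀ᵀ (1 + δ(φ(t, z*))) dt = T. -/
theorem symmetric_flow_integral_odd
    {n : ℕ} (φ : ℝ → (Fin n → ℝ) → (Fin n → ℝ)) (σ : (Fin n → ℝ) → (Fin n → ℝ))
    (hφcont : Continuous (fun p : ℝ × (Fin n → ℝ) => φ p.1 p.2))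
    (hφ0 : ∀ z, φ 0 z = z)
    (hφadd : ∀ s t z, φ (s + t) z = φ s (φ t z))
    (hinv : ∀ z, σ (σ z) = z)
    (hsym : ∀ t z, σ (φ t z) = φ t (σ z))
    (zstar : Fin n → ℝ) (T : ℝ) (hT : 0 < T)
    (hper : φ T zstar = zstar)
    (hhalf : σ zstar = φ (T / 2) zstar)
    (δ : (Fin n → ℝ) → ℝ) (hδcont : Continuous δ)
    (hodd : ∀ z, δ (σ z) = - δ z)
    (hgt : ∀ z, -1 < δ z) :
    (∫ t in (0:ℝ)..T, (1 + δ (φ t zstar))) = T := by 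
  have hg : Continuous (fun t : ℝ => δ (φ t zstar)) :=
    hδcont.comp (hφcont.comp (continuous_id.prodMk continuous_const))
  have hanti : ∀ t, δ (φ (t + T / 2) zstar) = - δ (φ t zstar) := by
    intro t
    rw [hφadd, ← hhalf, ← hsym, hodd]
  have h2 : (∫ t in (T / 2)..T, δ (φ t zstar)) = - ∫ t in (0:ℝ)..(T / 2), δ (φ t zstar) := by
    have h := intervalIntegral.integral_comp_add_right
      (a := 0) (b := T / 2) (fun t : ℝ => δ (φ t zstar)) (T / 2)
    simp only [hanti, intervalIntegral.integral_neg, zero_add, add_halves] at h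
    exact h.symm
  have h3 := intervalIntegral.integral_add_adjacent_intervals
    (hg.intervalIntegrable (μ := MeasureTheory.volume) 0 (T / 2))
    (hg.intervalIntegrable (μ := MeasureTheory.volume) (T / 2) T)
  rw [intervalIntegral.integral_add (continuous_const.intervalIntegrable _ _)
    (hg.intervalIntegrable _ _), ← h3, h2]
  simp
end

section
/- Let γ = (x, y) : ℝ → ℝ² be a T-periodic solution (T > 0) of the planar system ẋ = y(1 − x²), ẏ = −x(1 − x²), with x(t) ∈ (−1, 1) for all t and with x(0) = 0 (the orbit meets the y-axis at γ(0)) and γ(T/2) = (−x(T/2-shifted)...). Precisely: assume γ'(t) = (y(t)(1 − x(t)²), −x(t)(1 − x(t)²)), γ(t+T) = γ(t), |x(t)| < 1 for all t, and σ(γ(0)) = γ(0) where σ(x,y) = (−x,y). Then ∫₀ᵀ (1 + x(t)) dt = T, and consequently there exists a T-periodic solution of the system ẋ = y(1 − x), ẏ = −x(1 − x) with the same image as γ. -/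
theorem equal_period_reversible_example
    (γ : ℝ → ℝ × ℝ) (T : ℝ) (hT : 0 < T)
    (hsol : ∀ t, HasDerivAt γ
      ((γ t).2 * (1 - (γ t).1 ^ 2), -(γ t).1 * (1 - (γ t).1 ^ 2)) t)
    (hper : ∀ t, γ (t + T) = γ t)
    (hstrip : ∀ t, |(γ t).1| < 1)
    (hfix : ((-(γ 0).1, (γ 0).2) : ℝ × ℝ) = γ 0) :
    (∫ t in (0:ℝ)..T, (1 + (γ t).1)) = T ∧
    ∃ η : ℝ → ℝ × ℝ,
      (∀ s, HasDerivAt η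
        ((η s).2 * (1 - (η s).1), -(η s).1 * (1 - (η s).1)) s) ∧
      (∀ s, η (s + T) = η s) ∧
      Set.range η = Set.range γ := by
  have hcont : Continuous γ :=
    continuous_iff_continuousAt.2 fun t => (hsol t).continuousAt
  have hx : ∀ t, HasDerivAt (fun t => (γ t).1) ((γ t).2 * (1 - (γ t).1 ^ 2)) t := fun t =>
    (hasFDerivAt_fst (𝕜 := ℝ) (p := γ t)).comp_hasDerivAt t (hsol t)
  have hy : ∀ t, HasDerivAt (fun t => (γ t).2) (-(γ t).1 * (1 - (γ t).1 ^ 2)) t := fun t =>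
    (hasFDerivAt_snd (𝕜 := ℝ) (p := γ t)).comp_hasDerivAt t (hsol t)
  have hxc : Continuous fun t => (γ t).1 := continuous_fst.comp hcont
  have hpos : ∀ t, 0 < 1 - (γ t).1 ^ 2 := fun t => by
    have := abs_lt.1 (hstrip t)
    nlinarith
  have hcons : ∀ t, (γ t).1 ^ 2 + (γ t).2 ^ 2 = (γ 0).1 ^ 2 + (γ 0).2 ^ 2 := by
    have hd : ∀ t, HasDerivAt (fun t => (γ t).1 ^ 2 + (γ t).2 ^ 2) 0 t := fun t => by
      refine (((hx t).pow 2).add ((hy t).pow 2)).congr_deriv ?_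
      push_cast
      ring
    intro t
    exact is_const_of_deriv_eq_zero (fun t => (hd t).differentiableAt) (fun t => (hd t).deriv) t 0
  set c := (γ 0).1 ^ 2 + (γ 0).2 ^ 2 with hc
  have hden : ∀ t, 1 - c + (γ t).2 ^ 2 = 1 - (γ t).1 ^ 2 := fun t => by
    have := hcons t
    linarith
  have hzero : ∫ t in (0:ℝ)..T, -(γ t).1 = 0 := by
    have h := intervalIntegral.integral_comp_mul_deriv'' (a := 0) (b := T)
      (f := fun t => (γ t).2) (f' := fun t => -(γ t).1 * (1 - (γ t).1 ^ 2))
      (g := fun y => (1 - c + y ^ 2)⁻¹)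
      (continuous_snd.comp hcont).continuousOn
      (fun t _ => (hy t).hasDerivWithinAt)
      (by fun_prop)
      (by
        apply ContinuousOn.inv₀ (by fun_prop)
        rintro _ ⟨t, _, rfl⟩
        simp only [hden]
        exact (hpos t).ne')
    have h0 : (γ T).2 = (γ 0).2 := by
      have := hper 0
      rw [zero_add] at this
      rw [this]
    simp only [h0, intervalIntegral.integral_same, Function.comp, hden] at h
    refine Eq.trans ?_ h
    apply intervalIntegral.integral_congr
    intro t _
    have := (hpos t).ne'
    simp only
    field_simp
  have hint : (∫ t in (0:ℝ)..T, (1 + (γ t).1)) = T := by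
    rw [intervalIntegral.integral_neg] at hzero
    rw [intervalIntegral.integral_add (by simp) (hxc.intervalIntegrable _ _)]
    simp
    linarith
  refine ⟨hint, ?_⟩
  have hc1 : Continuous fun t => 1 + (γ t).1 := by fun_prop
  have h1 : ∀ t, 0 < 1 + (γ t).1 := fun t => by
    have := abs_lt.1 (hstrip t)
    linarith
  set s : ℝ → ℝ := fun t => ∫ u in (0:ℝ)..t, (1 + (γ u).1) with hs
  have hsd : ∀ t, HasDerivAt s (1 + (γ t).1) t := fun t =>
    hc1.integral_hasStrictDerivAt 0 t |>.hasDerivAt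
  have hsm : StrictMono s := strictMono_of_deriv_pos fun t => by
    rw [(hsd t).deriv]; exact h1 t
  have hsT : ∀ t, s (t + T) = s t + T := fun t => by
    have hp : Function.Periodic (fun u => 1 + (γ u).1) T := fun u => by simp [hper]
    have e := hp.intervalIntegral_add_eq t 0
    rw [zero_add, hint] at e
    have := intervalIntegral.integral_add_adjacent_intervals (μ := MeasureTheory.volume)
      (hc1.intervalIntegrable 0 t) (hc1.intervalIntegrable t (t + T))
    simp only [hs]
    rw [← this, e]
  have hgp : Function.Periodic (fun t => s t - t) T := fun t => by
    simp only [hsT]; ring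
  have hsn : ∀ n : ℤ, s (n * T) = n * T := fun n => by
    have h := hgp.int_mul_eq n
    have h0 : s 0 = 0 := by simp [hs]
    simp only [h0] at h
    linarith
  have hsc : Continuous s := continuous_iff_continuousAt.2 fun t => (hsd t).continuousAt
  have hsurj : Function.Surjective s := fun v => by
    refine mem_range_of_exists_le_of_exists_ge hsc ⟨⌊v / T⌋ * T, ?_⟩ ⟨⌈v / T⌉ * T, ?_⟩
    · rw [hsn]
      exact (le_div_iff₀ hT).1 (Int.floor_le _)
    · rw [hsn]
      exact (div_le_iff₀ hT).1 (Int.le_ceil _)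
  let e := hsm.orderIsoOfSurjective s hsurj
  have he : ∀ t, e t = s t := fun t => rfl
  have hse : ∀ v, s (e.symm v) = v := fun v => e.apply_symm_apply v
  refine ⟨fun v => γ (e.symm v), fun v => ?_, fun v => ?_, ?_⟩
  · have hd := HasDerivAt.of_local_left_inverse (f := s) (g := e.symm)
      e.symm.continuous.continuousAt (hsd (e.symm v)) (h1 _).ne'
      (Filter.Eventually.of_forall hse)
    refine ((hsol (e.symm v)).scomp v hd).congr_deriv ?_
    have hne := (h1 (e.symm v)).ne'
    ext
    · simp
      field_simp
      ring
    · simp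
      field_simp
      ring
  · have : e.symm (v + T) = e.symm v + T := by
      apply hsm.injective
      rw [hse, hsT, hse]
    simp only [this, hper]
  · exact e.symm.surjective.range_comp γ
end

section
/- Let γ = (x, y) : ℝ → ℝ² be a solution of the planar system ẋ = y(1 − (x+y)²), ẏ = −x(1 − (x+y)²) with minimal period T > 0, such that |x(t) + y(t)| < 1 for all t and γ(T/2) = −γ(0) (the orbit is symmetric with respect to the origin, with antipodal points reached after half a period). Then ∫₀ᵀ (1 + x(t) + y(t)) dt = T, and consequently there exists a T-periodic solution of the system ẋ = y(1 − x − y), ẏ = −x(1 − x − y) with the same image as γ. -/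
theorem equal_period_symmetric_example
    (γ : ℝ → ℝ × ℝ) (T : ℝ) (hT : 0 < T)
    (hsol : ∀ t, HasDerivAt γ
      ((γ t).2 * (1 - ((γ t).1 + (γ t).2) ^ 2),
       -(γ t).1 * (1 - ((γ t).1 + (γ t).2) ^ 2)) t)
    (hper : ∀ t, γ (t + T) = γ t)
    (hmin : ∀ t, 0 < t → t < T → γ t ≠ γ 0)
    (hstrip : ∀ t, |(γ t).1 + (γ t).2| < 1)
    (hhalf : γ (T / 2) = - γ 0) :
    (∫ t in (0:ℝ)..T, (1 + (γ t).1 + (γ t).2)) = T ∧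
    ∃ η : ℝ → ℝ × ℝ,
      (∀ s, HasDerivAt η
        ((η s).2 * (1 - (η s).1 - (η s).2),
         -(η s).1 * (1 - (η s).1 - (η s).2)) s) ∧
      (∀ s, η (s + T) = η s) ∧
      Set.range η = Set.range γ := by
  classical
  have hx : ∀ t, HasDerivAt (fun t => (γ t).1) ((γ t).2 * (1 - ((γ t).1 + (γ t).2) ^ 2)) t :=
    fun t => (hasFDerivAt_fst (𝕜 := ℝ) (p := γ t)).comp_hasDerivAt t (hsol t)
  have hy : ∀ t, HasDerivAt (fun t => (γ t).2) (-(γ t).1 * (1 - ((γ t).1 + (γ t).2) ^ 2)) t :=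
    fun t => (hasFDerivAt_snd (𝕜 := ℝ) (p := γ t)).comp_hasDerivAt t (hsol t)
  have hcx : Continuous (fun t => (γ t).1) :=
    continuous_iff_continuousAt.2 fun t => (hx t).continuousAt
  have hcy : Continuous (fun t => (γ t).2) :=
    continuous_iff_continuousAt.2 fun t => (hy t).continuousAt
  -- conserved quantity
  have hE : ∀ t, (γ t).1 ^ 2 + (γ t).2 ^ 2 = (γ 0).1 ^ 2 + (γ 0).2 ^ 2 := by
    intro t
    have hd : ∀ t, HasDerivAt (fun t => (γ t).1 ^ 2 + (γ t).2 ^ 2) 0 t := by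
      intro t
      have h := ((hx t).pow 2).add ((hy t).pow 2)
      refine h.congr_deriv ?_
      push_cast
      ring
    exact is_const_of_deriv_eq_zero (fun t => (hd t).differentiableAt) (fun t => (hd t).deriv) t 0
  obtain ⟨R, hR⟩ : ∃ R : ℝ, R = (γ 0).1 ^ 2 + (γ 0).2 ^ 2 + 1 := ⟨_, rfl⟩
  have hb : ∀ t, γ t ∈ Metric.closedBall (0 : ℝ × ℝ) R := by
    intro t
    have h := hE t
    rw [mem_closedBall_zero_iff, Prod.norm_def, max_le_iff, Real.norm_eq_abs, Real.norm_eq_abs,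
      abs_le, abs_le]
    refine ⟨⟨?_, ?_⟩, ?_, ?_⟩ <;>
    nlinarith [sq_nonneg ((γ t).1 - 1), sq_nonneg ((γ t).1 + 1), sq_nonneg ((γ t).2 - 1),
      sq_nonneg ((γ t).2 + 1), sq_nonneg (γ t).1, sq_nonneg (γ t).2]
  obtain ⟨V, hV⟩ : ∃ V : ℝ × ℝ → ℝ × ℝ, V = fun z => (z.2 * (1 - (z.1 + z.2) ^ 2),
    -z.1 * (1 - (z.1 + z.2) ^ 2)) := ⟨_, rfl⟩
  have hVc : ContDiff ℝ 1 V := by rw [hV]; fun_prop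
  obtain ⟨K, hK⟩ : ∃ K, LipschitzOnWith K V (Metric.closedBall (0 : ℝ × ℝ) R) :=
    hVc.contDiffOn.exists_lipschitzOnWith one_ne_zero (convex_closedBall _ _)
      (isCompact_closedBall _ _)
  have hanti : ∀ t, γ (t + T / 2) = - γ t := by
    have h := ODE_solution_unique_univ (v := fun _ => V)
      (s := fun _ => Metric.closedBall (0 : ℝ × ℝ) R) (K := K) (t₀ := 0)
      (f := fun t => γ (t + T / 2)) (g := fun t => - γ t) (fun _ => hK)
      (fun t => ⟨by
        have h1 := (hsol (t + T / 2)).comp_add_const t (T / 2)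
        rw [hV]; exact h1, hb _⟩)
      (fun t => ⟨by
        have h1 := (hsol t).neg
        rw [hV]
        refine h1.congr_deriv ?_
        ext <;> simp only [Prod.fst_neg, Prod.snd_neg] <;> ring, by simpa using hb t⟩)
      (by simpa using hhalf)
    exact fun t => congrFun h t
  obtain ⟨d, hd⟩ : ∃ d : ℝ → ℝ, d = fun t => 1 + (γ t).1 + (γ t).2 := ⟨_, rfl⟩
  have hdc : Continuous d := by rw [hd]; fun_prop
  have hdper : Function.Periodic d T := by intro t; simp only [hd, hper]
  have hdpos : ∀ t, 0 < d t := by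
    intro t
    have := (abs_lt.1 (hstrip t)).1
    simp only [hd]; linarith
  have hdi : ∀ a b, IntervalIntegrable d MeasureTheory.volume a b :=
    fun a b => hdc.intervalIntegrable a b
  have hint : (∫ t in (0:ℝ)..T, d t) = T := by
    rw [← intervalIntegral.integral_add_adjacent_intervals (hdi 0 (T / 2)) (hdi (T / 2) T)]
    have h1 : (∫ t in (T / 2)..T, d t) = ∫ t in (0:ℝ)..(T / 2), (2 - d t) := by
      have h2 := intervalIntegral.integral_comp_add_right (a := 0) (b := T / 2) d (T / 2)
      rw [zero_add, add_halves] at h2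
      rw [← h2]
      congr 1
      funext t
      simp only [hd, hanti, Prod.fst_neg, Prod.snd_neg]
      ring
    rw [h1, intervalIntegral.integral_sub (by simp) (hdi _ _)]
    simp
  refine ⟨by rw [hd] at hint; exact hint, ?_⟩
  obtain ⟨S, hS⟩ : ∃ S : ℝ → ℝ, S = fun t => ∫ u in (0:ℝ)..t, d u := ⟨_, rfl⟩
  have hSd : ∀ t, HasDerivAt S (d t) t := by
    intro t
    rw [hS]
    exact hdc.integral_hasStrictDerivAt 0 t |>.hasDerivAt
  have hS0 : S 0 = 0 := by simp [hS]
  have hSc : Continuous S := continuous_iff_continuousAt.2 fun t => (hSd t).continuousAt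
  have hSmono : StrictMono S := strictMono_of_deriv_pos fun t => by
    rw [(hSd t).deriv]; exact hdpos t
  have hST : ∀ t, S (t + T) = S t + T := by
    intro t
    have h1 := hdper.intervalIntegral_add_eq t 0
    rw [zero_add, hint] at h1
    simp only [hS]
    rw [← intervalIntegral.integral_add_adjacent_intervals (hdi 0 t) (hdi t (t + T)), h1]
  have hp : Function.Periodic (fun t => S t - t) T := by
    intro t; simp only [hST]; ring
  have hSn : ∀ n : ℤ, S (n * T) = n * T := by
    intro n
    have h1 := hp.int_mul_eq n
    simp only [hS0] at h1
    linarith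
  have hSsurj : Function.Surjective S := by
    intro u
    obtain ⟨n, hn⟩ := exists_int_gt (u / T)
    obtain ⟨m, hm⟩ := exists_int_lt (u / T)
    rw [div_lt_iff₀ hT] at hn
    rw [lt_div_iff₀ hT] at hm
    exact mem_range_of_exists_le_of_exists_ge hSc ⟨m * T, by rw [hSn]; exact hm.le⟩
      ⟨n * T, by rw [hSn]; exact hn.le⟩
  let e := hSmono.orderIsoOfSurjective S hSsurj
  have heS : ∀ t, e t = S t := fun t => rfl
  have hSe : ∀ u, S (e.symm u) = u := fun u => by rw [← heS]; exact e.apply_symm_apply u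
  have hec : Continuous e.symm := e.symm.continuous
  have heder : ∀ u, HasDerivAt e.symm (d (e.symm u))⁻¹ u := fun u =>
    (hSd (e.symm u)).of_local_left_inverse hec.continuousAt (hdpos _).ne'
      (Filter.Eventually.of_forall hSe)
  refine ⟨fun u => γ (e.symm u), ?_, ?_, ?_⟩
  · intro u
    have h1 := (hsol (e.symm u)).scomp u (heder u)
    refine h1.congr_deriv ?_
    have h2 := (hdpos (e.symm u)).ne'
    have h3 : d (e.symm u) = 1 + (γ (e.symm u)).1 + (γ (e.symm u)).2 := by rw [hd]
    ext
    · simp only [Prod.smul_fst, smul_eq_mul]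
      rw [inv_mul_eq_iff_eq_mul₀ h2, h3]; ring
    · simp only [Prod.smul_snd, smul_eq_mul]
      rw [inv_mul_eq_iff_eq_mul₀ h2, h3]; ring
  · intro u
    have h1 : e.symm (u + T) = e.symm u + T := by
      apply hSmono.injective
      rw [hSe, hST, hSe]
    simp only [h1, hper]
  · exact e.symm.surjective.range_comp γ
end
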